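/- Let G be a finite group and P a finite G-connected G-poset. Then the equivariant topological complexity of the geometric realization of the order complex of P is finite: TC_G(|K(P)|) < ∞. -/

import Mathlib

/-! ### Module A: equivariant TC / CC / LS for topological G-spaces -/

/-- The zigzag order `0 < 1 > 2 < 3 > ⋯` on natural numbers. -/
def zigzagLE (i j : ℕ) : Prop := i = j ∨ (i % 2 = 0 ∧ (j = i + 1 ∨ i = j + 1))

/-- The combinatorial interval `J m = {0, 1, …, m}`. -/
def J (m : ℕ) : Type := Fin (m + 1)

namespace J

/-- The underlying natural number of a point of `J m`. -/
def val {m : ℕ} (i : J m) : ℕ := Fin.val i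

/-- The initial point `0` of the combinatorial interval. -/
def zero (m : ℕ) : J m := (0 : Fin (m + 1))

/-- The final point `m` of the combinatorial interval. -/
def last (m : ℕ) : J m := Fin.last m

/-- The topology on `J m` whose open sets are the down-closed sets for the zigzag order. -/
instance (m : ℕ) : TopologicalSpace (J m) where
  IsOpen U := ∀ ⦃a⦄, a ∈ U → ∀ ⦃b⦄, zigzagLE (J.val b) (J.val a) → b ∈ U
  isOpen_univ := fun a _ b _ => Set.mem_univ b
  isOpen_inter := fun s t hs ht a ha b hba => ⟨hs ha.1 hba, ht ha.2 hba⟩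
  isOpen_sUnion := fun S hS a ha b hba => by
    obtain ⟨t, htS, hat⟩ := ha
    exact ⟨t, htS, hS t htS hat hba⟩

end J

section Equivariant

variable (G : Type*) [Group G]

/-- A set is `G`-invariant if it is stable under the action of every group element. -/
def GInvariant {α : Type*} [SMul G α] (U : Set α) : Prop :=
  ∀ g : G, ∀ x ∈ U, g • x ∈ U

variable (X : Type*) [TopologicalSpace X] [MulAction G X]

/-- `U ⊆ X × X` admits a continuous equivariant section of the free path fibration
`π : X^I → X × X`, `α ↦ (α 0, α 1)`. -/
def EqNavigable (U : Set (X × X)) : Prop :=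
  ∃ s : U → C(unitInterval, X), Continuous s ∧
    (∀ u : U, s u 0 = (u : X × X).1 ∧ s u 1 = (u : X × X).2) ∧
    (∀ (g : G) (u : U) (h : g • (u : X × X) ∈ U) (t : unitInterval),
      s ⟨g • (u : X × X), h⟩ t = g • s u t)

/-- The equivariant topological complexity: the least `k` such that `X × X` admits a cover by
`k` open invariant sets, each admitting a continuous equivariant section of the free path
fibration; `⊤` if there is no such cover. -/
noncomputable def eqTC : ℕ∞ :=
  sInf {k : ℕ∞ | ∃ n : ℕ, k = n ∧ ∃ U : Fin n → Set (X × X),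
    (∀ i, IsOpen (U i)) ∧ (∀ i, GInvariant G (U i)) ∧ (⋃ i, U i) = Set.univ ∧
    ∀ i, EqNavigable G X (U i)}

/-- `U ⊆ X × X` admits a continuous equivariant section of the combinatorial path fibration
`q_m : X^{J_m} → X × X`, `β ↦ (β 0, β m)`. -/
def EqNavigableJ (m : ℕ) (U : Set (X × X)) : Prop :=
  ∃ s : U → C(J m, X), Continuous s ∧
    (∀ u : U, s u (J.zero m) = (u : X × X).1 ∧ s u (J.last m) = (u : X × X).2) ∧
    (∀ (g : G) (u : U) (h : g • (u : X × X) ∈ U) (t : J m),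
      s ⟨g • (u : X × X), h⟩ t = g • s u t)

/-- The equivariant combinatorial complexity with paths of length `m`: the least `k` such that
`X × X` admits a cover by `k` open invariant sets, each admitting a continuous equivariant
section of the combinatorial path fibration `q_m`; `⊤` if there is no such cover. -/
noncomputable def eqCCm (m : ℕ) : ℕ∞ :=
  sInf {k : ℕ∞ | ∃ n : ℕ, k = n ∧ ∃ U : Fin n → Set (X × X),
    (∀ i, IsOpen (U i)) ∧ (∀ i, GInvariant G (U i)) ∧ (⋃ i, U i) = Set.univ ∧
    ∀ i, EqNavigableJ G X m (U i)}

/-- The equivariant combinatorial complexity: the minimum over all `m ≥ 1` of `eqCCm`. -/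
noncomputable def eqCC : ℕ∞ := ⨅ m : ℕ, eqCCm G X (m + 1)

/-- `U ⊆ X` is `G`-categorical for the orbit of `x₀`: the inclusion of `U` into `X` is
`G`-homotopic to a map taking values in the orbit of `x₀`. -/
def GCategoricalAt (U : Set X) (x₀ : X) : Prop :=
  ∃ F : U × unitInterval → X, Continuous F ∧
    (∀ u : U, F (u, 0) = (u : X)) ∧
    (∀ (g : G) (u : U) (h : g • (u : X) ∈ U) (t : unitInterval),
      F (⟨g • (u : X), h⟩, t) = g • F (u, t)) ∧
    (∀ u : U, F (u, 1) ∈ MulAction.orbit G x₀)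

/-- `U ⊆ X` is `G`-categorical: the inclusion of `U` into `X` is `G`-homotopic to a map taking
values in a single orbit. -/
def GCategorical (U : Set X) : Prop :=
  ∃ x₀ : X, GCategoricalAt G X U x₀

/-- The equivariant Lusternik–Schnirelmann category: the least `k` such that `X` is covered by
`k` open invariant `G`-categorical sets; `⊤` if there is no such cover. -/
noncomputable def eqLS : ℕ∞ :=
  sInf {k : ℕ∞ | ∃ n : ℕ, k = n ∧ ∃ U : Fin n → Set X,
    (∀ i, IsOpen (U i)) ∧ (∀ i, GInvariant G (U i)) ∧ (⋃ i, U i) = Set.univ ∧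
    ∀ i, GCategorical G X (U i)}

end Equivariant
/-! ### Module C: ordered G-simplicial complexes and their geometric realizations -/

/-- An ordered `G`-simplicial complex: a finite abstract simplicial complex whose vertex set
carries a partial order in which every simplex is totally ordered, together with an action of
`G` on the vertices by monotone simplicial maps. -/
structure GOSC (G : Type) [Group G] : Type 1 where
  /-- the vertex set -/
  V : Type
  [fin : Fintype V]
  [dec : DecidableEq V]
  [po : PartialOrder V]
  /-- the set of simplices -/
  faces : Set (Finset V)
  singleton_mem : ∀ v : V, {v} ∈ faces
  nonempty_of_mem : ∀ s ∈ faces, s.Nonempty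
  down_closed : ∀ s ∈ faces, ∀ t ⊆ s, t.Nonempty → t ∈ faces
  face_chain : ∀ s ∈ faces, ∀ x ∈ s, ∀ y ∈ s, x ≤ y ∨ y ≤ x
  /-- the action of `G` on vertices -/
  smul : G → V → V
  smul_one : ∀ v, smul 1 v = v
  smul_mul : ∀ g h v, smul (g * h) v = smul g (smul h v)
  smul_mono : ∀ g : G, ∀ x y : V, x ≤ y → smul g x ≤ smul g y
  smul_faces : ∀ g : G, ∀ s ∈ faces, s.image (smul g) ∈ faces

attribute [instance] GOSC.fin GOSC.dec GOSC.po

namespace GOSC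

variable {G : Type} [Group G]

/-- The underlying set of the geometric realization `|K|`: formal convex combinations of
vertices whose support is a simplex of `K`. -/
def realSet (K : GOSC G) : Set (K.V → ℝ) :=
  {f | (∀ v, 0 ≤ f v) ∧ (∑ v, f v) = 1 ∧ ∃ s ∈ K.faces, ∀ v, f v ≠ 0 → v ∈ s}

/-- The geometric realization `|K|` of an ordered `G`-simplicial complex, topologized as a
subspace of Euclidean space `K.V → ℝ`. -/
def Real (K : GOSC G) : Type := {f : K.V → ℝ // f ∈ K.realSet}

instance (K : GOSC G) : TopologicalSpace K.Real :=
  inferInstanceAs (TopologicalSpace {f : K.V → ℝ // f ∈ K.realSet})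

/-- Each `g : G` acts on `K.V` by an order isomorphism. -/
def permOf (K : GOSC G) (g : G) : Equiv K.V K.V where
  toFun := K.smul g
  invFun := K.smul g⁻¹
  left_inv := fun v => by
    rw [← K.smul_mul, inv_mul_cancel, K.smul_one]
  right_inv := fun v => by
    rw [← K.smul_mul, mul_inv_cancel, K.smul_one]

/-- The action of `G` on the geometric realization, by affine extension:
`(g • f) v = f (g⁻¹ • v)`. -/
instance (K : GOSC G) : SMul G K.Real where
  smul g f := ⟨fun v => f.val (K.smul g⁻¹ v), by
    obtain ⟨hnn, hsum, s, hs, hsupp⟩ := f.prop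
    refine ⟨fun v => hnn _, ?_, s.image (K.smul g), K.smul_faces g s hs, ?_⟩
    · rw [show (∑ v, f.val (K.smul g⁻¹ v)) = ∑ v, f.val (K.permOf g⁻¹ v) from rfl,
        Equiv.sum_comp (K.permOf g⁻¹) f.val]
      exact hsum
    · intro v hv
      have : K.smul g⁻¹ v ∈ s := hsupp _ hv
      refine Finset.mem_image.mpr ⟨K.smul g⁻¹ v, this, ?_⟩
      rw [← K.smul_mul, mul_inv_cancel, K.smul_one]⟩

lemma smul_apply (K : GOSC G) (g : G) (f : K.Real) (v : K.V) :
    (g • f).val v = f.val (K.smul g⁻¹ v) := rfl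

instance (K : GOSC G) : MulAction G K.Real where
  one_smul f := by
    apply Subtype.ext
    funext v
    rw [smul_apply, inv_one, K.smul_one]
  mul_smul g h f := by
    apply Subtype.ext
    funext v
    rw [smul_apply, smul_apply, smul_apply, mul_inv_rev, K.smul_mul]

end GOSC
/-! ### Order complexes of finite G-posets -/

/-- The order complex `K(P)` of a finite `G`-poset `P` (a finite poset with `G` acting by
order-preserving maps): the ordered `G`-simplicial complex whose vertices are the elements of
`P` and whose simplices are the nonempty totally ordered subsets (chains) of `P`. -/
noncomputable def orderComplexG (G : Type) [Group G] (P : Type) [Fintype P] [PartialOrder P]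
    [MulAction G P] (hmono : ∀ g : G, Monotone (fun p : P => g • p)) : GOSC G :=
  letI : DecidableEq P := Classical.decEq P
  { V := P
    faces := {s | s.Nonempty ∧ ∀ x ∈ s, ∀ y ∈ s, x ≤ y ∨ y ≤ x}
    singleton_mem := fun v => ⟨Finset.singleton_nonempty v, by
      intro x hx y hy
      rw [Finset.mem_singleton] at hx hy
      subst hx; subst hy; exact Or.inl le_rfl⟩
    nonempty_of_mem := fun s hs => hs.1
    down_closed := fun s hs t hts htne => ⟨htne, fun x hx y hy => hs.2 x (hts hx) y (hts hy)⟩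
    face_chain := fun s hs => hs.2
    smul := fun g p => g • p
    smul_one := fun p => one_smul G p
    smul_mul := fun g h p => mul_smul g h p
    smul_mono := fun g x y hxy => hmono g hxy
    smul_faces := fun g s hs => ⟨hs.1.image _, by
      intro x hx y hy
      rcases Finset.mem_image.mp hx with ⟨a, ha, rfl⟩
      rcases Finset.mem_image.mp hy with ⟨b, hb, rfl⟩
      rcases hs.2 a ha b hb with h | h
      · exact Or.inl (hmono g h)
      · exact Or.inr (hmono g h)⟩ }

namespace GOSC

variable {G : Type} [Group G]

/-- The vertex `x`, as a point of the geometric realization. -/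
noncomputable def vertexPoint (K : GOSC G) (x : K.V) : K.Real :=
  ⟨fun v => if v = x then 1 else 0, by
    refine ⟨fun v => by positivity, by simp, {x}, K.singleton_mem x, ?_⟩
    intro v hv
    rw [Finset.mem_singleton]
    by_contra h
    exact hv (if_neg h)⟩

/-- The open star of a vertex `x` in `|K|`: the union of the open simplices `σ°` over all
simplices `σ` containing `x`; equivalently, the set of points whose barycentric coordinate
at `x` is nonzero. -/
def star (K : GOSC G) (x : K.V) : Set K.Real :=
  {f | f.val x ≠ 0}

/-- The saturation `G · star(x)` of the open star of a vertex. -/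
def gStar (K : GOSC G) (x : K.V) : Set K.Real :=
  {h | ∃ g : G, ∃ f ∈ K.star x, h = g • f}

/-- The geometric realization `|K|` is `G`-connected: for every subgroup `H ≤ G`, the
fixed-point set `|K|^H` is path-connected. -/
def RealGConnected (K : GOSC G) : Prop :=
  ∀ H : Subgroup G, ∀ a ∈ {y : K.Real | ∀ h ∈ H, h • y = y},
    ∀ b ∈ {y : K.Real | ∀ h ∈ H, h • y = y},
      JoinedIn {y : K.Real | ∀ h ∈ H, h • y = y} a b

end GOSC

/-- A zigzag of order relations between `x` and `y` staying inside the set `S`. -/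
def ZigzagIn {P : Type*} [PartialOrder P] (S : Set P) (x y : P) : Prop :=
  Relation.ReflTransGen (fun a b => a ∈ S ∧ b ∈ S ∧ (a ≤ b ∨ b ≤ a)) x y

/-- A finite `G`-poset `P` is `G`-connected: for every subgroup `H ≤ G`, the fixed-point set
`P^H` is order-connected (any two of its points are joined by a zigzag of order relations in
`P^H`; equivalently, `P^H` with its down-set topology is path-connected). -/
def PosetGConnected (G P : Type*) [Group G] [PartialOrder P] [MulAction G P] : Prop :=
  ∀ H : Subgroup G, ∀ x ∈ {p : P | ∀ h ∈ H, h • p = p}, ∀ y ∈ {p : P | ∀ h ∈ H, h • p = p},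
    ZigzagIn {p : P | ∀ h ∈ H, h • p = p} x y

/-!
The open stars of the vertices cover `|K|`, so `|K| × |K|` is covered by the finitely many products
`star x × star y`. If `g` moves a point of `star x` into `star x`, then `x` and `g • x` lie in a
common chain, hence coincide because `g` permutes the finite vertex set monotonically. So the
elements of `G` relating two points of `star x × star y` fix both vertices, and the following motion
planner is equivariant there: go straight to `x`, follow a chosen path from `x` to `y` inside the
fixed points of the stabilizer of `(x, y)`, go straight to the target. Translating it around by `G`
gives an equivariant motion planner on the saturation of `star x × star y`.

For an order complex, a zigzag in `P^H` is a broken line in `|K(P)|^H`, and every point of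
`|K(P)|^H` is joined in `|K(P)|^H` to a vertex of its carrier, which `H` fixes.
-/

open Function
open scoped unitInterval

theorem isFixedPt_of_mem_periodicPts_of_comparable {α : Type*} [PartialOrder α] {f : α → α}
    (hf : Monotone f) {x : α} (hx : x ∈ periodicPts f) (hcomp : x ≤ f x ∨ f x ≤ x) :
    IsFixedPt f x := by
  obtain ⟨n, hn, hper⟩ := hx
  replace hper : f^[n] x = x := hper
  rcases hcomp with hle | hge
  · have hfx : f x ≤ f^[n] x := hf.monotone_iterate_of_le_map hle hn
    exact (hfx.trans_eq hper).antisymm hle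
  · have hfx : f^[n] x ≤ f x := hf.antitone_iterate_of_map_le hge hn
    exact hge.antisymm (hper.symm.trans_le hfx)

section Saturation

variable (G : Type*) [Group G] {X : Type*} [MulAction G X]

/-- The saturation `G · U` of a set `U`, that is, the smallest invariant set containing it,
to which equivariant motion planners on `U` extend. -/
def saturation (U : Set X) : Set X := {x | ∃ g : G, g • x ∈ U}

theorem subset_saturation (U : Set X) : U ⊆ saturation G U := fun x hx =>
  ⟨1, by rwa [one_smul]⟩

theorem gInvariant_saturation (U : Set X) : GInvariant G (saturation G U) := by
  rintro h x ⟨g, hg⟩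
  exact ⟨g * h⁻¹, by rwa [smul_smul, inv_mul_cancel_right]⟩

theorem isOpen_saturation [TopologicalSpace X] [ContinuousConstSMul G X] {U : Set X}
    (hU : IsOpen U) : IsOpen (saturation G U) := by
  have : saturation G U = ⋃ g : G, (g • ·) ⁻¹' U := by
    ext x
    simp [saturation]
  rw [this]
  exact isOpen_iUnion fun g => hU.preimage (continuous_const_smul g)

end Saturation

theorem trans_apply_eq_smul {G X : Type*} [TopologicalSpace X] [SMul G X] {g : G}
    {a b c a' b' c' : X} {p : Path a b} {q : Path b c} {p' : Path a' b'} {q' : Path b' c'}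
    (hp : ∀ t, p' t = g • p t) (hq : ∀ t, q' t = g • q t) (t : I) :
    (p'.trans q') t = g • (p.trans q) t := by
  simp only [Path.trans_apply]
  split_ifs
  · exact hp _
  · exact hq _

section EqNavigable

variable {G X : Type*} [Group G] [TopologicalSpace X] [MulAction G X]

theorem EqNavigable.of_continuous_family {U : Set (X × X)} (γ : ∀ u : U, Path u.1.1 u.1.2)
    (hγ : Continuous ↿γ)
    (hsmul : ∀ (g : G) (u : U) (h : g • u.1 ∈ U) (t : I), γ ⟨g • u.1, h⟩ t = g • γ u t) :
    EqNavigable G X U :=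
  ⟨fun u => (γ u).toContinuousMap, ContinuousMap.continuous_of_continuous_uncurry _ hγ,
    fun u => ⟨(γ u).source, (γ u).target⟩, hsmul⟩

variable [ContinuousConstSMul G X]

theorem eqNavigable_saturation {W : Set (X × X)} (hW : IsOpen W) (h : EqNavigable G X W) :
    EqNavigable G X (saturation G W) := by
  obtain ⟨s, hs, hends, hequiv⟩ := h
  have hsmul : ∀ (g : G) (w w' : W), w'.1 = g • w.1 → s w' = g • s w := by
    rintro g w ⟨_, hw'⟩ rfl
    exact ContinuousMap.ext (hequiv g w hw')
  let V (g : G) : Set (saturation G W) := {u | g • u.1 ∈ W}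
  have hV (g : G) : IsOpen (V g) :=
    hW.preimage ((continuous_const_smul g).comp continuous_subtype_val)
  let φ (g : G) : C(V g, C(I, X)) :=
    ⟨fun u => g⁻¹ • s ⟨g • u.1.1, u.2⟩, by fun_prop⟩
  have hφ (g k : G) (u : saturation G W) (hg : u ∈ V g) (hk : u ∈ V k) :
      φ g ⟨u, hg⟩ = φ k ⟨u, hk⟩ := by
    have := hsmul (k * g⁻¹) ⟨g • u.1, hg⟩ ⟨k • u.1, hk⟩ (by simp [smul_smul])
    simp [φ, this, smul_smul]
  let S : C(saturation G W, C(I, X)) :=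
    ContinuousMap.liftCover V φ hφ fun u => u.2.imp fun g hg => (hV g).mem_nhds hg
  have hS (g : G) (u : saturation G W) (hg : g • u.1 ∈ W) : S u = g⁻¹ • s ⟨g • u.1, hg⟩ :=
    ContinuousMap.liftCover_coe (⟨u, hg⟩ : V g)
  refine ⟨S, S.continuous, fun u => ?_, fun h u hu t => ?_⟩
  · obtain ⟨g, hg⟩ := u.2
    simp [hS g u hg, hends]
  · obtain ⟨g, hg⟩ := u.2
    have hgh : (g * h⁻¹) • h • u.1 = g • u.1 := by simp [smul_smul]
    simp [hS g u hg, hS (g * h⁻¹) ⟨h • u.1, hu⟩ (hgh ▸ hg), hgh, smul_smul]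

theorem eqTC_le_natCard {ι : Type*} [Finite ι] (W : ι → Set (X × X)) (hW : ∀ i, IsOpen (W i))
    (hcover : ∀ u, ∃ i, u ∈ W i) (hnav : ∀ i, EqNavigable G X (W i)) :
    eqTC G X ≤ Nat.card ι := by
  let e := Finite.equivFin ι
  refine sInf_le ⟨Nat.card ι, rfl, fun i => saturation G (W (e.symm i)),
    fun i => isOpen_saturation G (hW _), fun i => gInvariant_saturation G _, ?_,
    fun i => eqNavigable_saturation (hW _) (hnav _)⟩
  refine Set.iUnion_eq_univ_iff.2 fun u => ?_
  obtain ⟨i, hi⟩ := hcover u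
  exact ⟨e i, subset_saturation G _ (by rwa [e.symm_apply_apply])⟩

end EqNavigable

namespace GOSC

variable {G : Type} [Group G] {K : GOSC G}

theorem real_ext {a b : K.Real} (h : ∀ v, a.val v = b.val v) : a = b :=
  Subtype.ext (funext h)

theorem continuous_real_val : Continuous (Subtype.val : K.Real → K.V → ℝ) :=
  continuous_subtype_val

instance : ContinuousConstSMul G K.Real where
  continuous_const_smul g := Continuous.subtype_mk
    (continuous_pi fun v => (continuous_apply (K.smul g⁻¹ v)).comp continuous_real_val) _

/-- The closed simplex of `K.V → ℝ` spanned by the vertices in `s`, in barycentric coordinates;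
the realization is the union of those with `s` a face. -/
def closedSimplex (K : GOSC G) (s : Finset K.V) : Set (K.V → ℝ) :=
  stdSimplex ℝ K.V ∩ {f | ∀ v, f v ≠ 0 → v ∈ s}

theorem mem_realSet_iff {f : K.V → ℝ} : f ∈ K.realSet ↔ ∃ s ∈ K.faces, f ∈ K.closedSimplex s :=
  ⟨fun ⟨hnonneg, hsum, s, hs, hsupp⟩ => ⟨s, hs, ⟨hnonneg, hsum⟩, hsupp⟩,
    fun ⟨s, hs, ⟨hnonneg, hsum⟩, hsupp⟩ => ⟨hnonneg, hsum, s, hs, hsupp⟩⟩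

theorem convex_closedSimplex (s : Finset K.V) : Convex ℝ (K.closedSimplex s) := by
  refine (convex_stdSimplex ℝ K.V).inter fun f hf f' hf' a b _ _ _ v hv => ?_
  by_contra hvs
  have hfv : f v = 0 := not_not.1 (mt (hf v) hvs)
  have hfv' : f' v = 0 := not_not.1 (mt (hf' v) hvs)
  simp [hfv, hfv'] at hv

/-- Two points of `|K|` lie in a common closed simplex, which makes the affine segment between
them a path in `|K|`. -/
def InCommonSimplex (a b : K.Real) : Prop :=
  ∃ s ∈ K.faces, a.val ∈ K.closedSimplex s ∧ b.val ∈ K.closedSimplex s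

theorem InCommonSimplex.lineMap_mem_realSet {a b : K.Real} (h : InCommonSimplex a b) (t : I) :
    AffineMap.lineMap a.val b.val (t : ℝ) ∈ K.realSet := by
  obtain ⟨s, hs, ha, hb⟩ := h
  exact mem_realSet_iff.2 ⟨s, hs, (convex_closedSimplex s).lineMap_mem ha hb t.2⟩

/-- The straight path between two points of a common simplex, affine in the parameter. -/
def segmentPath {a b : K.Real} (h : InCommonSimplex a b) : Path a b where
  toFun t := ⟨AffineMap.lineMap a.val b.val (t : ℝ), h.lineMap_mem_realSet t⟩
  continuous_toFun :=
    (AffineMap.lineMap_continuous.comp continuous_subtype_val).subtype_mk _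
  source' := Subtype.ext (AffineMap.lineMap_apply_zero _ _)
  target' := Subtype.ext (AffineMap.lineMap_apply_one _ _)

theorem continuous_segmentPath {Y : Type*} [TopologicalSpace Y] {a b : Y → K.Real}
    (ha : Continuous a) (hb : Continuous b) (h : ∀ y, InCommonSimplex (a y) (b y)) :
    Continuous ↿fun y => segmentPath (h y) := by
  have ha' := continuous_real_val.comp (ha.comp (continuous_fst (Y := I)))
  have hb' := continuous_real_val.comp (hb.comp (continuous_fst (Y := I)))
  exact (ha'.lineMap hb' (continuous_subtype_val.comp continuous_snd)).subtype_mk _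

theorem segmentPath_apply_eq_smul {a b a' b' : K.Real} (h : InCommonSimplex a b)
    (h' : InCommonSimplex a' b') {g : G} (ha : a' = g • a) (hb : b' = g • b) (t : I) :
    segmentPath h' t = g • segmentPath h t := by
  subst ha hb
  exact real_ext fun v => rfl

theorem joinedIn_of_inCommonSimplex {a b : K.Real} (h : InCommonSimplex a b) {H : Subgroup G}
    (ha : ∀ g ∈ H, g • a = a) (hb : ∀ g ∈ H, g • b = b) :
    JoinedIn {y : K.Real | ∀ g ∈ H, g • y = y} a b :=
  ⟨segmentPath h, fun t g hg =>
    (segmentPath_apply_eq_smul h h (ha g hg).symm (hb g hg).symm t).symm⟩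

theorem vertexPoint_val (x : K.V) : (K.vertexPoint x).val = Pi.single x 1 :=
  funext fun v => (Pi.single_apply x 1 v).symm

theorem smul_vertexPoint (g : G) (x : K.V) :
    g • K.vertexPoint x = K.vertexPoint (K.smul g x) := by
  refine real_ext fun v => ?_
  have : K.smul g⁻¹ v = x ↔ v = K.smul g x := (K.permOf g).symm_apply_eq
  rw [smul_apply, vertexPoint_val, vertexPoint_val, Pi.single_apply, Pi.single_apply]
  simp only [this]

theorem smul_vertexPoint_eq_self {g : G} {x : K.V} (h : K.smul g x = x) :
    g • K.vertexPoint x = K.vertexPoint x := by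
  rw [smul_vertexPoint, h]

theorem vertexPoint_mem_closedSimplex {s : Finset K.V} {x : K.V} (hx : x ∈ s) :
    (K.vertexPoint x).val ∈ K.closedSimplex s := by
  rw [vertexPoint_val]
  refine ⟨single_mem_stdSimplex ℝ x, fun v hv => ?_⟩
  obtain rfl : v = x := not_not.1 fun hne => hv (Pi.single_eq_of_ne hne 1)
  exact hx

theorem inCommonSimplex_vertexPoint {s : Finset K.V} (hs : s ∈ K.faces) {x y : K.V} (hx : x ∈ s)
    (hy : y ∈ s) : InCommonSimplex (K.vertexPoint x) (K.vertexPoint y) :=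
  ⟨s, hs, vertexPoint_mem_closedSimplex hx, vertexPoint_mem_closedSimplex hy⟩

theorem inCommonSimplex_vertexPoint_of_mem_star {a : K.Real} {x : K.V} (ha : a ∈ K.star x) :
    InCommonSimplex a (K.vertexPoint x) := by
  obtain ⟨s, hs, has⟩ := mem_realSet_iff.1 a.prop
  exact ⟨s, hs, has, vertexPoint_mem_closedSimplex (has.2 x ha)⟩

theorem isOpen_star (x : K.V) : IsOpen (K.star x) :=
  isOpen_ne_fun ((continuous_apply x).comp continuous_real_val) continuous_const

theorem exists_mem_star (a : K.Real) : ∃ x, a ∈ K.star x := by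
  have hsum : ∑ v, a.val v ≠ 0 := a.prop.2.1 ▸ one_ne_zero
  obtain ⟨x, -, hx⟩ := Finset.exists_ne_zero_of_sum_ne_zero hsum
  exact ⟨x, hx⟩

theorem smul_eq_self_of_comparable {g : G} {x : K.V} (h : x ≤ K.smul g x ∨ K.smul g x ≤ x) :
    K.smul g x = x :=
  isFixedPt_of_mem_periodicPts_of_comparable (K.smul_mono g)
    ((K.permOf g).injective.mem_periodicPts x) h

theorem smul_eq_self_of_mem_star {g : G} {x : K.V} {a : K.Real} (ha : a ∈ K.star x)
    (hga : g • a ∈ K.star x) : K.smul g x = x := by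
  obtain ⟨s, hs, -, hsupp⟩ := mem_realSet_iff.1 (g • a).prop
  have hgx : g • a ∈ K.star (K.smul g x) := by
    change a.val (K.smul g⁻¹ (K.smul g x)) ≠ 0
    rwa [← K.smul_mul, inv_mul_cancel, K.smul_one]
  exact smul_eq_self_of_comparable (K.face_chain s hs x (hsupp x hga) _ (hsupp _ hgx))

theorem eqNavigable_star_prod_star (x y : K.V)
    (hxy : JoinedIn {z : K.Real | ∀ g ∈ MulAction.stabilizer G (K.vertexPoint x) ⊓
      MulAction.stabilizer G (K.vertexPoint y), g • z = z} (K.vertexPoint x) (K.vertexPoint y)) :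
    EqNavigable G K.Real (K.star x ×ˢ K.star y) := by
  let W : Set (K.Real × K.Real) := K.star x ×ˢ K.star y
  obtain ⟨γ, hγ⟩ := hxy
  have hx (u : W) := inCommonSimplex_vertexPoint_of_mem_star u.2.1
  have hy (u : W) := inCommonSimplex_vertexPoint_of_mem_star u.2.2
  refine .of_continuous_family
    (fun u : W => ((segmentPath (hx u)).trans γ).trans (segmentPath (hy u)).symm) ?_ ?_
  · have hγ' : Continuous ↿fun _ : W => γ := γ.continuous.comp continuous_snd
    have hstart := continuous_segmentPath (by fun_prop) continuous_const hx
    have hend := continuous_segmentPath (by fun_prop) continuous_const hy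
    exact Path.trans_continuous_family _ (Path.trans_continuous_family _ hstart _ hγ') _
      (Path.symm_continuous_family _ hend)
  · intro g u hgu
    have hgx := smul_vertexPoint_eq_self (smul_eq_self_of_mem_star u.2.1 hgu.1)
    have hgy := smul_vertexPoint_eq_self (smul_eq_self_of_mem_star u.2.2 hgu.2)
    refine trans_apply_eq_smul (trans_apply_eq_smul ?_ fun t => ?_) fun t => ?_
    · exact segmentPath_apply_eq_smul (hx u) (hx ⟨_, hgu⟩) rfl hgx.symm
    · exact (hγ t g ⟨hgx, hgy⟩).symm
    · exact segmentPath_apply_eq_smul (hy u) (hy ⟨_, hgu⟩) rfl hgy.symm (σ t)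

theorem exists_joinedIn_vertexPoint {H : Subgroup G} {a : K.Real} (ha : ∀ g ∈ H, g • a = a) :
    ∃ x, (∀ g ∈ H, K.smul g x = x) ∧
      JoinedIn {z : K.Real | ∀ g ∈ H, g • z = z} a (K.vertexPoint x) := by
  obtain ⟨x, hax⟩ := exists_mem_star a
  have hx (g : G) (hg : g ∈ H) : K.smul g x = x :=
    smul_eq_self_of_mem_star hax (by rwa [ha g hg])
  exact ⟨x, hx, joinedIn_of_inCommonSimplex (inCommonSimplex_vertexPoint_of_mem_star hax) ha
    fun g hg => smul_vertexPoint_eq_self (hx g hg)⟩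

end GOSC

section OrderComplex

open GOSC

variable {G P : Type} [Group G] [Fintype P] [PartialOrder P] [MulAction G P]
  (hmono : ∀ g : G, Monotone (fun p : P => g • p))

theorem inCommonSimplex_vertexPoint_orderComplexG {p q : P} (h : p ≤ q ∨ q ≤ p) :
    InCommonSimplex ((orderComplexG G P hmono).vertexPoint p)
      ((orderComplexG G P hmono).vertexPoint q) := by
  classical
  have hpq : ({p, q} : Finset P) ∈ (orderComplexG G P hmono).faces := by
    refine ⟨Finset.insert_nonempty p {q}, ?_⟩
    simp [h, h.symm]
  have hp : p ∈ ({p, q} : Finset P) := by simp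
  have hq : q ∈ ({p, q} : Finset P) := by simp
  exact inCommonSimplex_vertexPoint hpq hp hq

theorem joinedIn_vertexPoint_of_zigzagIn {H : Subgroup G} {p q : P} (hp : ∀ g ∈ H, g • p = p)
    (hpq : ZigzagIn {r : P | ∀ g ∈ H, g • r = r} p q) :
    JoinedIn {z : (orderComplexG G P hmono).Real | ∀ g ∈ H, g • z = z}
      ((orderComplexG G P hmono).vertexPoint p) ((orderComplexG G P hmono).vertexPoint q) := by
  have hfix {r : P} (hr : ∀ g ∈ H, g • r = r) (g : G) (hg : g ∈ H) :
      g • (orderComplexG G P hmono).vertexPoint r = (orderComplexG G P hmono).vertexPoint r :=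
    smul_vertexPoint_eq_self (hr g hg)
  induction hpq with
  | refl => exact JoinedIn.refl (hfix hp)
  | tail _ hrs ih =>
    obtain ⟨hr, hs, hcomp⟩ := hrs
    exact ih.trans (joinedIn_of_inCommonSimplex
      (inCommonSimplex_vertexPoint_orderComplexG hmono hcomp) (hfix hr) (hfix hs))

theorem realGConnected_orderComplexG (hconn : PosetGConnected G P) :
    (orderComplexG G P hmono).RealGConnected := by
  intro H a ha b hb
  obtain ⟨p, hp, hap⟩ := exists_joinedIn_vertexPoint ha
  obtain ⟨q, hq, hbq⟩ := exists_joinedIn_vertexPoint hb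
  exact (hap.trans (joinedIn_vertexPoint_of_zigzagIn hmono hp (hconn H p hp q hq))).trans hbq.symm

end OrderComplex

theorem TC_real_orderComplex_lt_top_general {G : Type} [Group G] (K : GOSC G)
    (hK : K.RealGConnected) : eqTC G K.Real < ⊤ := by
  refine (eqTC_le_natCard (fun i : K.V × K.V => K.star i.1 ×ˢ K.star i.2) ?_ ?_ ?_).trans_lt
    (ENat.natCast_lt_top _)
  · exact fun i => (GOSC.isOpen_star i.1).prod (GOSC.isOpen_star i.2)
  · intro u
    obtain ⟨x, hx⟩ := GOSC.exists_mem_star u.1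
    obtain ⟨y, hy⟩ := GOSC.exists_mem_star u.2
    exact ⟨(x, y), hx, hy⟩
  · rintro ⟨x, y⟩
    let H := MulAction.stabilizer G (K.vertexPoint x) ⊓ MulAction.stabilizer G (K.vertexPoint y)
    exact GOSC.eqNavigable_star_prod_star x y (hK H _ (fun _ hg => hg.1) _ fun _ hg => hg.2)

/-- Let `G` be a finite group and `P` a finite `G`-connected `G`-poset.
Then the equivariant topological complexity of the geometric realization of the order
complex of `P` is finite: `TC_G(|K(P)|) < ∞`. -/
theorem TC_real_orderComplex_lt_top (G P : Type) [Group G] [Finite G]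
    [Fintype P] [PartialOrder P] [MulAction G P]
    (hmono : ∀ g : G, Monotone (fun p : P => g • p))
    (hconn : PosetGConnected G P) :
    eqTC G (orderComplexG G P hmono).Real < ⊤ :=
  TC_real_orderComplex_lt_top_general _ (realGConnected_orderComplexG hmono hconn)
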